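/- Let {φ_e}_{e∈E} be a conformal iterated function system in ℝⁿ with limit set J, and assume X ∖ closure(⋃_{e∈E} φ_e(X)) ≠ ∅. Then there exists a set J̃ ⊆ J whose Hausdorff dimension equals the Hausdorff dimension of J and such that J is porous at every point x ∈ J̃. -/

import Mathlib

/-!
The set `J̃` consists of the points of `J` coded by sequences that use only finitely many letters.

Bounded distortion gives uniform control of the sets `φ_w(X)` (`CIFS.Controlled`): writing
`size w` for `‖Dφ_w‖` at a fixed point of the interior of `X`, the diameter of `φ_w(X)` is at most
`L * size w`, and `φ_w` maps a ball of radius `r` onto a set containing a ball of radius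
`c * r * size w`. The latter follows from an open mapping argument
(`CIFS.ball_subset_image_ball`) that uses only differentiability and a lower bound for the
conformal ratio.

Porosity (`CIFS.Controlled.porousAt`). Some ball in the interior of `X` misses every `φ_e(X)`. By
the open set condition and injectivity its image under `φ_w` misses `J` (`CIFS.Controlled.hole`).
If `ω` uses finitely many letters, the sizes of consecutive prefixes of `ω` have ratios bounded
below, so at every small scale `r` some prefix `w` of `ω` has size comparable to `r` with
`φ_w(X) ⊆ B(π ω, r)`, and `φ_w` of the ball above is a hole of radius comparable to `r`.

Dimension (`CIFS.Controlled.dimH_finite_range`). Let `t' < t < dim J`. Sorting the words of length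
`N` by the dyadic value `2⁻ᵏ` of their size, and using that the `t`-dimensional Hausdorff measure of
`J` is infinite, some `N` and `k` admit more than `C * 2 ^ (k * t')` words, with `C` arbitrary
(`CIFS.Controlled.exists_many_words`). By the open set condition and a packing argument a fixed
proportion of them have images of `X` at mutual distance at least `2⁻ᵏ`
(`CIFS.Controlled.exists_separated_words`). For `C` large in terms of the distortion constant, the
`b` words selected generate a subset of `J̃` that admits a `t'`-Hölder map onto `[0, 1]`, reading the
codes as base-`b` expansions (`CIFS.Controlled.le_dimH`). Hence `dim J̃ ≥ t'`.
-/

open Metric Set Filter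

/-- `por A x r` is the porosity of the set `A` at the point `x` at scale `r`:
the supremum of all `c ≥ 0` such that some open ball of radius `c·r` is contained
in `B(x,r) ∖ A`. -/
noncomputable def por {X : Type*} [MetricSpace X] (A : Set X) (x : X) (r : ℝ) : ℝ :=
  sSup {c : ℝ | 0 ≤ c ∧ ∃ y : X, Metric.ball y (c * r) ⊆ Metric.ball x r \ A}

/-- `A` is porous at the point `x`. -/
def PorousAt {X : Type*} [MetricSpace X] (A : Set X) (x : X) : Prop :=
  ∃ c ∈ Set.Ioo (0 : ℝ) 1, ∃ r₀ > (0 : ℝ), ∀ r ∈ Set.Ioo (0 : ℝ) r₀, c ≤ por A x r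

/-- `A` is porous. -/
def Porous {X : Type*} [MetricSpace X] (A : Set X) : Prop :=
  ∃ c ∈ Set.Ioo (0 : ℝ) 1, ∃ r₀ > (0 : ℝ), ∀ x ∈ A, ∀ r ∈ Set.Ioo (0 : ℝ) r₀, c ≤ por A x r

/-- A conformal iterated function system in `ℝⁿ` (single-vertex conformal GDMS):
a compact connected set `X` equal to the closure of its interior, an open connected
set `W ⊇ X`, and injective `C¹` maps `φ e : W → W` with conformal (invertibly similar)
derivatives `D e`, mapping `X` into `X`, with Lipschitz constant at most `s ∈ (0,1)`
on `W`, satisfying the Open Set Condition. -/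
structure CIFS (n : ℕ) (E : Type*) where
  X : Set (EuclideanSpace ℝ (Fin n))
  W : Set (EuclideanSpace ℝ (Fin n))
  φ : E → EuclideanSpace ℝ (Fin n) → EuclideanSpace ℝ (Fin n)
  D : E → EuclideanSpace ℝ (Fin n) → EuclideanSpace ℝ (Fin n) →L[ℝ] EuclideanSpace ℝ (Fin n)
  s : ℝ
  hs : s ∈ Set.Ioo (0 : ℝ) 1
  hXcompact : IsCompact X
  hXconn : IsConnected X
  hXreg : X = closure (interior X)
  hWopen : IsOpen W
  hWconn : IsConnected W
  hXW : X ⊆ W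
  hInj : ∀ e, Set.InjOn (φ e) W
  hMapsW : ∀ e, Set.MapsTo (φ e) W W
  hMapsX : ∀ e, Set.MapsTo (φ e) X X
  hDeriv : ∀ e, ∀ x ∈ W, HasFDerivAt (φ e) (D e x) x
  hConf : ∀ e, ∀ x ∈ W, IsConformalMap (D e x)
  hLip : ∀ e, LipschitzOnWith s.toNNReal (φ e) W
  hOSC : ∀ a b : E, a ≠ b → Disjoint (φ a '' interior X) (φ b '' interior X)

namespace CIFS

variable {n : ℕ} {E : Type*}

/-- The composition `φ_ω = φ_{ω₁} ∘ ⋯ ∘ φ_{ωₙ}` associated to a finite word `ω`. -/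
def compWord (S : CIFS n E) (ω : List E) :
    EuclideanSpace ℝ (Fin n) → EuclideanSpace ℝ (Fin n) :=
  ω.foldr (fun e g => S.φ e ∘ g) id

/-- The derivative of `φ_ω` at a point, computed by the chain rule. -/
noncomputable def derivWord (S : CIFS n E) :
    List E → EuclideanSpace ℝ (Fin n) →
      (EuclideanSpace ℝ (Fin n) →L[ℝ] EuclideanSpace ℝ (Fin n))
  | [], _ => ContinuousLinearMap.id ℝ _
  | e :: ω, x => (S.D e (S.compWord ω x)).comp (S.derivWord ω x)

/-- The Bounded Distortion Property: there is `K ≥ 1` such that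
`‖Dφ_ω(p)‖ ≤ K·‖Dφ_ω(q)‖` for every nonempty word `ω` and all `p, q ∈ W`. -/
def BDP (S : CIFS n E) : Prop :=
  ∃ K : ℝ, 1 ≤ K ∧ ∀ ω : List E, ω ≠ [] → ∀ p ∈ S.W, ∀ q ∈ S.W,
    ‖S.derivWord ω p‖ ≤ K * ‖S.derivWord ω q‖

end CIFS

namespace CIFS

open scoped Topology ENNReal NNReal

/-! ### Composition and derivatives of words -/

section

variable {n : ℕ} {E : Type*}

/-- The vector space `ℝⁿ` with its Euclidean norm. -/
local notation "𝔼" => EuclideanSpace ℝ (Fin n)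

lemma compWord_nil (S : CIFS n E) : S.compWord [] = id := rfl

lemma compWord_cons (S : CIFS n E) (e : E) (w : List E) :
    S.compWord (e :: w) = S.φ e ∘ S.compWord w := rfl

lemma compWord_append (S : CIFS n E) (u v : List E) (x : 𝔼) :
    S.compWord (u ++ v) x = S.compWord u (S.compWord v x) := by
  induction u with
  | nil => rfl
  | cons e u ih =>
    rw [List.cons_append, compWord_cons, compWord_cons, Function.comp_apply, ih]
    rfl

lemma derivWord_append (S : CIFS n E) (u v : List E) (x : 𝔼) :
    S.derivWord (u ++ v) x = (S.derivWord u (S.compWord v x)).comp (S.derivWord v x) := by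
  induction u with
  | nil => rfl
  | cons e u ih =>
    rw [List.cons_append, derivWord, derivWord, ih, compWord_append]
    rfl

lemma compWord_mapsTo_W (S : CIFS n E) (w : List E) : MapsTo (S.compWord w) S.W S.W := by
  induction w with
  | nil => exact mapsTo_id _
  | cons e w ih => exact (S.hMapsW e).comp ih

lemma compWord_mapsTo_X (S : CIFS n E) (w : List E) : MapsTo (S.compWord w) S.X S.X := by
  induction w with
  | nil => exact mapsTo_id _
  | cons e w ih => exact (S.hMapsX e).comp ih

lemma compWord_injOn (S : CIFS n E) (w : List E) : InjOn (S.compWord w) S.W := by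
  induction w with
  | nil => exact injOn_id _
  | cons e w ih => exact (S.hInj e).comp ih (S.compWord_mapsTo_W w)

lemma hasFDerivAt_compWord (S : CIFS n E) (w : List E) {x : 𝔼} (hx : x ∈ S.W) :
    HasFDerivAt (S.compWord w) (S.derivWord w x) x := by
  induction w with
  | nil => exact hasFDerivAt_id x
  | cons e w ih => exact (S.hDeriv e _ (S.compWord_mapsTo_W w hx)).comp x ih

lemma continuousOn_compWord (S : CIFS n E) (w : List E) : ContinuousOn (S.compWord w) S.W :=
  fun _ hx => (S.hasFDerivAt_compWord w hx).continuousAt.continuousWithinAt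

lemma isConformalMap_derivWord (S : CIFS n E) (w : List E) {x : 𝔼} (hx : x ∈ S.W) :
    IsConformalMap (S.derivWord w x) := by
  induction w with
  | nil => exact isConformalMap_id
  | cons e w ih => exact (S.hConf e _ (S.compWord_mapsTo_W w hx)).comp ih

end

/-! ### Linear conformal maps -/

section

variable {V : Type*} [NormedAddCommGroup V] [NormedSpace ℝ V]

lemma norm_apply_of_conformal [Nontrivial V] {A : V →L[ℝ] V} (hA : IsConformalMap A) (v : V) :
    ‖A v‖ = ‖A‖ * ‖v‖ := by
  obtain ⟨c, -, li, rfl⟩ := hA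
  rw [norm_smul, LinearIsometry.norm_toContinuousLinearMap]
  simp [norm_smul]

lemma norm_pos_of_conformal [Nontrivial V] {A : V →L[ℝ] V} (hA : IsConformalMap A) :
    0 < ‖A‖ := by
  obtain ⟨c, hc, li, rfl⟩ := hA
  rw [norm_smul, LinearIsometry.norm_toContinuousLinearMap]
  simpa using hc

lemma norm_comp_of_conformal [Nontrivial V] {A B : V →L[ℝ] V} (hA : IsConformalMap A)
    (hB : IsConformalMap B) : ‖A.comp B‖ = ‖A‖ * ‖B‖ := by
  obtain ⟨v, hv⟩ := exists_ne (0 : V)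
  have h1 := norm_apply_of_conformal (hA.comp hB) v
  rw [ContinuousLinearMap.comp_apply, norm_apply_of_conformal hA, norm_apply_of_conformal hB,
    ← mul_assoc] at h1
  exact (mul_right_cancel₀ (norm_ne_zero_iff.2 hv) h1).symm

lemma surjective_of_conformal [FiniteDimensional ℝ V] [Nontrivial V] {A : V →L[ℝ] V}
    (hA : IsConformalMap A) : Function.Surjective A := by
  have h : Function.Injective A.toLinearMap := by
    rw [← LinearMap.ker_eq_bot, LinearMap.ker_eq_bot']
    intro v hv
    have h1 := norm_apply_of_conformal hA v
    have h2 : A v = 0 := hv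
    rw [h2, norm_zero] at h1
    rcases mul_eq_zero.1 h1.symm with h | h
    · exact absurd h (norm_pos_of_conformal hA).ne'
    · exact norm_eq_zero.1 h
  exact LinearMap.injective_iff_surjective.1 h

/-- A quantitative open mapping theorem without any smallness of the ball: if `f` is differentiable
on `closedBall x r` and its derivatives are conformal with ratio at least `m`, then the image of
the ball contains the ball of radius `m * r`. For `y` in the latter, a minimiser `z` of
`‖f z - y‖ + m' * ‖z - x‖` (with `m' < m`) lies in the open ball, and unless `f z = y`, moving `z`
in the direction `-(Df z)⁻¹ (f z - y)` would decrease the functional. -/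
lemma ball_subset_image_ball [FiniteDimensional ℝ V] [Nontrivial V] {f : V → V}
    {f' : V → V →L[ℝ] V} {x : V} {r m : ℝ} (hr : 0 < r)
    (hf : ∀ z ∈ closedBall x r, HasFDerivAt f (f' z) z)
    (hconf : ∀ z ∈ closedBall x r, IsConformalMap (f' z))
    (hm : ∀ z ∈ closedBall x r, m ≤ ‖f' z‖) :
    ball (f x) (m * r) ⊆ f '' ball x r := by
  intro y hy
  rw [mem_ball, dist_eq_norm] at hy
  have hmp : 0 < m := by
    by_contra h
    have := norm_nonneg (y - f x)
    nlinarith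
  obtain ⟨m', hm'1, hm'2⟩ : ∃ m', ‖y - f x‖ / r < m' ∧ m' < m :=
    exists_between ((div_lt_iff₀ hr).2 hy)
  have hm'0 : 0 ≤ m' := (div_nonneg (norm_nonneg _) hr.le).trans hm'1.le
  have hcont : ContinuousOn (fun z => ‖f z - y‖ + m' * ‖z - x‖) (closedBall x r) := by
    have : ContinuousOn f (closedBall x r) :=
      fun z hz => (hf z hz).continuousAt.continuousWithinAt
    fun_prop
  obtain ⟨z, hz, hmin⟩ := (isCompact_closedBall x r).exists_isMinOn
    ⟨x, mem_closedBall_self hr.le⟩ hcont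
  have hzx : ‖f z - y‖ + m' * ‖z - x‖ ≤ ‖f x - y‖ := by
    simpa using hmin (mem_closedBall_self hr.le)
  have hzb : z ∈ ball x r := by
    rw [mem_ball, dist_eq_norm]
    by_contra! h
    rw [div_lt_iff₀ hr, norm_sub_rev] at hm'1
    have := norm_nonneg (f z - y)
    have := mul_le_mul_of_nonneg_left h hm'0
    linarith
  refine ⟨z, hzb, ?_⟩
  by_contra hne
  have hpos : 0 < ‖f z - y‖ := norm_pos_iff.2 (sub_ne_zero.2 hne)
  obtain ⟨v, hv⟩ := surjective_of_conformal (hconf z hz) (f z - y)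
  have hvn : m * ‖v‖ ≤ ‖f z - y‖ := by
    rw [← hv, norm_apply_of_conformal (hconf z hz)]
    exact mul_le_mul_of_nonneg_right (hm z hz) (norm_nonneg _)
  have hvpos : 0 < ‖v‖ := by
    rw [norm_pos_iff]
    rintro rfl
    rw [map_zero] at hv
    simp [← hv] at hpos
  -- differentiability at `z` along `-v`, with error `ε * t * ‖v‖`, where `ε = (m - m') / 2`
  have hlittle := (hf z hz).isLittleO.def (show 0 < (m - m') / 2 by linarith)
  have htend : Tendsto (fun t : ℝ => z - t • v) (𝓝[>] 0) (𝓝 z) := by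
    have : Continuous (fun t : ℝ => z - t • v) := by fun_prop
    have h := (this.tendsto 0).mono_left (nhdsWithin_le_nhds (s := Ioi 0))
    simpa using h
  have hev := htend.eventually (hlittle.and (isOpen_ball.mem_nhds hzb))
  have hev1 : ∀ᶠ t : ℝ in 𝓝[>] 0, t < 1 :=
    nhdsWithin_le_nhds (eventually_lt_nhds one_pos)
  obtain ⟨t, ⟨⟨ht1, ht2⟩, ht3⟩, ht0⟩ :=
    ((hev.and hev1).and self_mem_nhdsWithin).exists
  have ht0 : 0 < t := ht0
  have hmin' : ‖f z - y‖ + m' * ‖z - x‖ ≤ ‖f (z - t • v) - y‖ + m' * ‖z - t • v - x‖ :=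
    hmin (ball_subset_closedBall ht2)
  have e1 : z - t • v - z = -(t • v) := by abel
  rw [e1, map_neg, map_smul, hv, norm_neg, norm_smul, Real.norm_of_nonneg ht0.le] at ht1
  have e2 : f (z - t • v) - y
      = (f (z - t • v) - f z - -(t • (f z - y))) + (1 - t) • (f z - y) := by
    rw [sub_smul, one_smul]; abel
  have h1 : ‖f (z - t • v) - y‖ ≤ (m - m') / 2 * (t * ‖v‖) + (1 - t) * ‖f z - y‖ := by
    rw [e2]
    refine (norm_add_le _ _).trans (add_le_add ht1 ?_)
    rw [norm_smul, Real.norm_of_nonneg (by linarith)]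
  have h2 : ‖z - t • v - x‖ ≤ ‖z - x‖ + t * ‖v‖ := by
    have e3 : z - t • v - x = (z - x) - t • v := by abel
    rw [e3]
    refine (norm_sub_le _ _).trans ?_
    rw [norm_smul, Real.norm_of_nonneg ht0.le]
  have h3 := mul_le_mul_of_nonneg_left h2 hm'0
  have h4 : 0 < (m - m') * (t * ‖v‖) := mul_pos (by linarith) (mul_pos ht0 hvpos)
  have h5 := mul_le_mul_of_nonneg_left hvn ht0.le
  nlinarith

end

/-! ### Bounded distortion and the geometry of the sets `φ_w(X)` -/

section

variable {n : ℕ} {E : Type*}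

lemma interior_X_nonempty (S : CIFS n E) : (interior S.X).Nonempty := by
  rw [← closure_nonempty_iff, ← S.hXreg]
  exact S.hXconn.nonempty

/-- A reference point in the interior of `X`. -/
noncomputable def base (S : CIFS n E) : EuclideanSpace ℝ (Fin n) := S.interior_X_nonempty.some

lemma base_mem_interior (S : CIFS n E) : S.base ∈ interior S.X := S.interior_X_nonempty.some_mem

lemma base_mem_X (S : CIFS n E) : S.base ∈ S.X := interior_subset S.base_mem_interior

lemma base_mem_W (S : CIFS n E) : S.base ∈ S.W := S.hXW S.base_mem_X

/-- The contraction ratio of `φ_w`, measured at the reference point. By bounded distortion this is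
`‖Dφ_w(x)‖` up to a factor `K`, for every `x ∈ W`. -/
noncomputable def size (S : CIFS n E) (w : List E) : ℝ := ‖S.derivWord w S.base‖

/-- The geometric estimates on the maps `φ_w` that the proof relies on; `size w` is comparable to
the diameter and to the inner radius of `φ_w(X)`, uniformly in `w`. -/
structure Controlled (S : CIFS n E) (K L c δ : ℝ) : Prop where
  K_pos : 0 < K
  L_pos : 0 < L
  c_pos : 0 < c
  δ_pos : 0 < δ
  size_append : ∀ u v, S.size u * S.size v ≤ K * S.size (u ++ v)
  upper : ∀ w, ∀ x ∈ S.X, ∀ y ∈ S.X, dist (S.compWord w x) (S.compWord w y) ≤ L * S.size w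
  ball_subset_W : ∀ x ∈ S.X, ball x δ ⊆ S.W
  ball_subset_image : ∀ w, ∀ x ∈ S.X, ∀ r, 0 < r → r ≤ δ →
    ball (S.compWord w x) (c * r * S.size w) ⊆ S.compWord w '' ball x r

lemma norm_derivWord_le (S : CIFS n E) (w : List E) {x : EuclideanSpace ℝ (Fin n)}
    (hx : x ∈ S.W) : ‖S.derivWord w x‖ ≤ S.s ^ w.length := by
  induction w with
  | nil => exact ContinuousLinearMap.norm_id_le
  | cons e w ih =>
    have hy := S.compWord_mapsTo_W w hx
    have h := (S.hDeriv e _ hy).le_of_lipschitzOn (S.hWopen.mem_nhds hy) (S.hLip e)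
    rw [Real.coe_toNNReal _ S.hs.1.le] at h
    rw [derivWord, List.length_cons, pow_succ']
    exact (ContinuousLinearMap.opNorm_comp_le _ _).trans
      (mul_le_mul h ih (norm_nonneg _) S.hs.1.le)

lemma size_le_pow (S : CIFS n E) (w : List E) : S.size w ≤ S.s ^ w.length :=
  S.norm_derivWord_le w S.base_mem_W

lemma size_le_one (S : CIFS n E) (w : List E) : S.size w ≤ 1 :=
  (S.size_le_pow w).trans (pow_le_one₀ S.hs.1.le S.hs.2.le)

lemma size_nonneg (S : CIFS n E) (w : List E) : 0 ≤ S.size w := norm_nonneg _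

/-- Any two points of the connected set `W` are joined by a chain of balls inside `W` that does not
depend on `w`, and on a ball `φ_w` is Lipschitz with constant `K * size w`. -/
lemma exists_upper (S : CIFS n E) {K : ℝ}
    (hK : ∀ w : List E, ∀ x ∈ S.W, ‖S.derivWord w x‖ ≤ K * S.size w) :
    ∃ L > 0, ∀ w, ∀ x ∈ S.X, ∀ y ∈ S.X,
      dist (S.compWord w x) (S.compWord w y) ≤ L * S.size w := by
  have hloc : ∀ x ∈ S.W, ∃ ε > 0, ∀ w, ∀ y ∈ ball x ε,
      dist (S.compWord w x) (S.compWord w y) ≤ |K| * ε * S.size w := by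
    intro x hx
    obtain ⟨ε, hε, hεW⟩ := Metric.isOpen_iff.1 S.hWopen x hx
    refine ⟨ε, hε, fun w y hy => ?_⟩
    have h := (convex_ball x ε).norm_image_sub_le_of_norm_hasFDerivWithin_le
      (f := S.compWord w) (f' := S.derivWord w)
      (fun z hz => (S.hasFDerivAt_compWord w (hεW hz)).hasFDerivWithinAt)
      (fun z hz => hK w z (hεW hz)) hy (mem_ball_self hε)
    rw [dist_eq_norm]
    rw [mem_ball, dist_comm, dist_eq_norm] at hy
    have h0 := S.size_nonneg w
    calc ‖S.compWord w x - S.compWord w y‖ ≤ K * S.size w * ‖x - y‖ := h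
      _ ≤ |K| * S.size w * ε := by
        gcongr
        exact le_abs_self K
      _ = _ := by ring
  have hpair : ∀ x ∈ S.W, ∀ y ∈ S.W, ∃ C, ∀ w,
      dist (S.compWord w x) (S.compWord w y) ≤ C * S.size w := by
    intro x hx y hy
    refine S.hWconn.isPreconnected.induction₂
      (fun x y => ∃ C, ∀ w, dist (S.compWord w x) (S.compWord w y) ≤ C * S.size w)
      ?_ ?_ ?_ hx hy
    · intro x hx
      obtain ⟨ε, hε, h⟩ := hloc x hx
      filter_upwards [nhdsWithin_le_nhds (ball_mem_nhds x hε)] with y hy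
      exact ⟨_, fun w => h w y hy⟩
    · rintro x y z - - - ⟨C, hC⟩ ⟨C', hC'⟩
      refine ⟨C + C', fun w => (dist_triangle _ (S.compWord w y) _).trans ?_⟩
      rw [add_mul]
      exact add_le_add (hC w) (hC' w)
    · rintro x y - - ⟨C, hC⟩
      exact ⟨C, fun w => by rw [dist_comm]; exact hC w⟩
  have hbase : ∃ C, ∀ w, ∀ x ∈ S.X,
      dist (S.compWord w S.base) (S.compWord w x) ≤ C * S.size w := by
    refine S.hXcompact.induction_on
      (p := fun A => ∃ C, ∀ w, ∀ x ∈ A,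
        dist (S.compWord w S.base) (S.compWord w x) ≤ C * S.size w) ?_ ?_ ?_ ?_
    · exact ⟨0, fun w x hx => hx.elim⟩
    · rintro A B hAB ⟨C, hC⟩
      exact ⟨C, fun w x hx => hC w x (hAB hx)⟩
    · rintro A B ⟨C, hC⟩ ⟨C', hC'⟩
      refine ⟨max C C', fun w x hx => ?_⟩
      have h0 := S.size_nonneg w
      rcases hx with hx | hx
      · exact (hC w x hx).trans (by gcongr; exact le_max_left _ _)
      · exact (hC' w x hx).trans (by gcongr; exact le_max_right _ _)
    · intro x hx
      obtain ⟨ε, hε, h⟩ := hloc x (S.hXW hx)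
      obtain ⟨C, hC⟩ := hpair _ S.base_mem_W x (S.hXW hx)
      refine ⟨ball x ε, nhdsWithin_le_nhds (ball_mem_nhds x hε), C + |K| * ε, fun w y hy => ?_⟩
      rw [add_mul]
      exact (dist_triangle _ (S.compWord w x) _).trans (add_le_add (hC w) (h w y hy))
  obtain ⟨C, hC⟩ := hbase
  refine ⟨2 * |C| + 1, by positivity, fun w x hx y hy => ?_⟩
  have h1 := hC w x hx
  have h2 := hC w y hy
  have h3 := dist_triangle_left (S.compWord w x) (S.compWord w y) (S.compWord w S.base)
  have h4 := mul_le_mul_of_nonneg_right (le_abs_self C) (S.size_nonneg w)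
  have h5 := S.size_nonneg w
  linarith

variable {S : CIFS n E} {K L c δ : ℝ}

lemma Controlled.lower (h : S.Controlled K L c δ) (w : List E) {x y : EuclideanSpace ℝ (Fin n)}
    (hx : x ∈ S.X) (hy : y ∈ S.X) :
    c * min δ (dist x y) * S.size w ≤ dist (S.compWord w x) (S.compWord w y) := by
  rcases eq_or_ne x y with rfl | hne
  · simp [h.δ_pos.le]
  by_contra! hlt
  obtain ⟨z, hz, hzy⟩ := h.ball_subset_image w x hx _ (lt_min h.δ_pos (dist_pos.2 hne))
    (min_le_left _ _) (by rwa [mem_ball, dist_comm] : S.compWord w y ∈ _)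
  have hzW := h.ball_subset_W x hx (ball_subset_ball (min_le_left _ _) hz)
  rw [S.compWord_injOn w hzW (S.hXW hy) hzy, mem_ball, dist_comm] at hz
  exact absurd hz (not_lt.2 (min_le_right _ _))

variable [Nontrivial (EuclideanSpace ℝ (Fin n))]

lemma size_nil (S : CIFS n E) : S.size [] = 1 := ContinuousLinearMap.norm_id

lemma size_pos (S : CIFS n E) (w : List E) : 0 < S.size w :=
  norm_pos_of_conformal (S.isConformalMap_derivWord w S.base_mem_W)

lemma exists_controlled (S : CIFS n E) (h : S.BDP) :
    ∃ K L c δ : ℝ, S.Controlled K L c δ := by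
  obtain ⟨K, hK1, hK⟩ := h
  have hK0 : 0 < K := by linarith
  have hK' : ∀ w : List E, ∀ p ∈ S.W, ∀ q ∈ S.W,
      ‖S.derivWord w p‖ ≤ K * ‖S.derivWord w q‖ := by
    intro w p hp q hq
    by_cases hw : w = []
    · subst hw
      exact le_mul_of_one_le_left (norm_nonneg _) hK1
    · exact hK w hw p hp q hq
  obtain ⟨L, hL, hupper⟩ := S.exists_upper fun w x hx => hK' w x hx S.base S.base_mem_W
  obtain ⟨δ, hδ, hδW⟩ := S.hXcompact.exists_cthickening_subset_open S.hWopen S.hXW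
  have hcb : ∀ x ∈ S.X, closedBall x δ ⊆ S.W := fun x hx =>
    (closedBall_subset_cthickening hx δ).trans hδW
  refine ⟨K, L, K⁻¹, δ, hK0, hL, inv_pos.2 hK0, hδ, fun u v => ?_, hupper,
    fun x hx => ball_subset_closedBall.trans (hcb x hx), fun w x hx r hr hrδ => ?_⟩
  · rw [size, size, size, derivWord_append, norm_comp_of_conformal
      (S.isConformalMap_derivWord u (S.compWord_mapsTo_W v S.base_mem_W))
      (S.isConformalMap_derivWord v S.base_mem_W), ← mul_assoc]
    exact mul_le_mul_of_nonneg_right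
      (hK' u _ S.base_mem_W _ (S.compWord_mapsTo_W v S.base_mem_W)) (norm_nonneg _)
  · have hsub : closedBall x r ⊆ S.W := (closedBall_subset_closedBall hrδ).trans (hcb x hx)
    have := ball_subset_image_ball (f := S.compWord w) (f' := S.derivWord w) (x := x)
      (m := K⁻¹ * S.size w) hr
      (fun z hz => S.hasFDerivAt_compWord w (hsub hz))
      (fun z hz => S.isConformalMap_derivWord w (hsub hz))
      (fun z hz => (inv_mul_le_iff₀ hK0).2 (hK' w _ S.base_mem_W _ (hsub hz)))
    rwa [mul_right_comm] at this

lemma Controlled.isOpen_image (h : S.Controlled K L c δ) (w : List E) {U : Set _}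
    (hU : IsOpen U) (hUX : U ⊆ S.X) : IsOpen (S.compWord w '' U) := by
  rw [Metric.isOpen_iff]
  rintro _ ⟨x, hx, rfl⟩
  obtain ⟨ε, hε, hεU⟩ := Metric.isOpen_iff.1 hU x hx
  have hr : 0 < min δ ε := lt_min h.δ_pos hε
  refine ⟨c * min δ ε * S.size w, mul_pos (mul_pos h.c_pos hr) (S.size_pos w), ?_⟩
  refine (h.ball_subset_image w x (hUX hx) _ hr (min_le_left _ _)).trans (image_mono ?_)
  exact (ball_subset_ball (min_le_right _ _)).trans hεU

lemma Controlled.image_interior_subset (h : S.Controlled K L c δ) (w : List E) :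
    S.compWord w '' interior S.X ⊆ interior S.X :=
  interior_maximal (((S.compWord_mapsTo_X w).mono_left interior_subset).image_subset)
    (h.isOpen_image w isOpen_interior interior_subset)

/-- The open set condition for two distinct words of the same length. -/
lemma Controlled.disjoint_interior (h : S.Controlled K L c δ) :
    ∀ u v : List E, u.length = v.length → u ≠ v →
      Disjoint (S.compWord u '' interior S.X) (S.compWord v '' interior S.X) := by
  intro u
  induction u with
  | nil =>
    intro v hl hne
    exact absurd (List.eq_nil_of_length_eq_zero hl.symm).symm hne
  | cons a u ih =>
    rintro (_ | ⟨b, v⟩) hl hne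
    · simp at hl
    rw [compWord_cons, compWord_cons, image_comp, image_comp]
    by_cases hab : a = b
    · subst hab
      have hW : ∀ w, S.compWord w '' interior S.X ⊆ S.W := fun w =>
        (h.image_interior_subset w).trans (interior_subset.trans S.hXW)
      exact disjoint_image_image fun x hx y hy hxy =>
        disjoint_left.1 (ih v (by simpa using hl) (by simpa using hne)) hx
          (S.hInj a (hW u hx) (hW v hy) hxy ▸ hy)
    · exact (S.hOSC a b hab).mono (image_mono (h.image_interior_subset u))
        (image_mono (h.image_interior_subset v))

lemma Controlled.disjoint_image (h : S.Controlled K L c δ) {u v : List E}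
    (hl : u.length = v.length) (hne : u ≠ v) :
    Disjoint (S.compWord u '' S.X) (S.compWord v '' interior S.X) := by
  refine ((h.disjoint_interior u v hl hne).closure_left
    (h.isOpen_image v isOpen_interior interior_subset)).mono_left ?_
  conv_lhs => rw [S.hXreg]
  refine ((S.continuousOn_compWord u).mono ?_).image_closure
  rw [← S.hXreg]
  exact S.hXW

end

/-! ### Porosity along codes that use finitely many letters -/

section

variable {n : ℕ} {E : Type*}

/-- The word formed by the first `m` letters of the infinite code `ω`. -/
def pre (ω : ℕ → E) (m : ℕ) : List E := List.ofFn fun i : Fin m => ω i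

lemma pre_length (ω : ℕ → E) (m : ℕ) : (pre ω m).length = m := List.length_ofFn

lemma pre_add (ω : ℕ → E) (m k : ℕ) :
    pre ω (m + k) = pre ω m ++ pre (fun i => ω (m + i)) k := by
  simp [pre, List.ofFn_add]

lemma pre_succ (ω : ℕ → E) (m : ℕ) : pre ω (m + 1) = pre ω m ++ [ω m] := by
  rw [pre_add]
  simp [pre]

lemma pre_congr {ω τ : ℕ → E} {m : ℕ} (h : ∀ i < m, ω i = τ i) : pre ω m = pre τ m := by
  unfold pre
  congr 1
  ext i
  exact h i i.2

/-- The porosity at a point of a nontrivial normed space is a supremum over a bounded set, so a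
single hole bounds it from below. -/
lemma le_por {V : Type*} [NormedAddCommGroup V] [NormedSpace ℝ V] [Nontrivial V] {A : Set V}
    {x y : V} {r c : ℝ} (hr : 0 < r) (hc : 0 ≤ c) (h : ball y (c * r) ⊆ ball x r \ A) :
    c ≤ por A x r := by
  refine le_csSup ⟨1, ?_⟩ ⟨hc, y, h⟩
  rintro c' ⟨hc', z, hz⟩
  by_contra! hlt
  have h1 : 0 < c' * r := by positivity
  have h2 := Metric.diam_mono (hz.trans sdiff_subset) isBounded_ball
  have h3 : diam (ball z (c' * r)) = 2 * (c' * r) := diam_ball_eq z h1.le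
  have h4 : diam (ball x r) = 2 * r := diam_ball_eq x hr.le
  nlinarith

variable [Nontrivial (EuclideanSpace ℝ (Fin n))]
variable {S : CIFS n E} {K L c δ : ℝ}

/-- A ball `ball q ρ` missing all first-level sets `φ_e(X)` gives, inside every `φ_w(X)`, a ball
missing the limit set: points of `J` coded by words other than `w` stay outside `φ_w(interior X)`
by the open set condition, and those coded by `w` lie in the sets `φ_w(φ_e(X))`. -/
lemma Controlled.hole (h : S.Controlled K L c δ) {π : (ℕ → E) → EuclideanSpace ℝ (Fin n)}
    (hπ : ∀ ω m, π ω ∈ S.compWord (pre ω m) '' S.X) {q : EuclideanSpace ℝ (Fin n)} {ρ : ℝ}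
    (hρ : 0 < ρ) (hρδ : ρ ≤ δ) (hq : ball q ρ ⊆ interior S.X \ ⋃ e, S.φ e '' S.X) (w : List E) :
    ball (S.compWord w q) (c * ρ * S.size w) ⊆ S.compWord w '' S.X \ range π := by
  intro y hy
  have hqX : q ∈ S.X := interior_subset (hq (mem_ball_self hρ)).1
  obtain ⟨z, hz, rfl⟩ := h.ball_subset_image w q hqX ρ hρ hρδ hy
  have hzX := interior_subset (hq hz).1
  refine ⟨mem_image_of_mem _ hzX, ?_⟩
  rintro ⟨τ, hτ⟩
  by_cases hw : pre τ w.length = w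
  · obtain ⟨x, hx, hxτ⟩ := hπ τ (w.length + 1)
    rw [pre_succ, hw, compWord_append, hτ] at hxτ
    have hφ : S.compWord [τ w.length] x = S.φ (τ w.length) x := rfl
    rw [hφ] at hxτ
    have := S.compWord_injOn w (S.hXW (S.hMapsX _ hx)) (S.hXW hzX) hxτ
    exact (hq hz).2 (mem_iUnion.2 ⟨_, x, hx, this⟩)
  · exact disjoint_left.1 (h.disjoint_image (pre_length τ w.length) hw) (hτ ▸ hπ τ w.length)
      (mem_image_of_mem _ (hq hz).1)

lemma Controlled.porousAt (h : S.Controlled K L c δ) {π : (ℕ → E) → EuclideanSpace ℝ (Fin n)}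
    (hπ : ∀ ω m, π ω ∈ S.compWord (pre ω m) '' S.X)
    (hxx1 : (S.X \ closure (⋃ e : E, S.φ e '' S.X)).Nonempty)
    {ω : ℕ → E} (hω : (range ω).Finite) : PorousAt (range π) (π ω) := by
  obtain ⟨q, ρ, hρ, hρδ, hq⟩ : ∃ q ρ, 0 < ρ ∧ ρ ≤ δ ∧
      ball q ρ ⊆ interior S.X \ ⋃ e, S.φ e '' S.X := by
    obtain ⟨x, hx, hx'⟩ := hxx1
    rw [S.hXreg] at hx
    obtain ⟨q, hq1, hq2⟩ := mem_closure_iff.1 hx _ isClosed_closure.isOpen_compl hx'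
    obtain ⟨ε, hε, hεs⟩ := Metric.isOpen_iff.1
      (isOpen_interior.inter isClosed_closure.isOpen_compl) q ⟨hq2, hq1⟩
    refine ⟨q, min ε δ, lt_min hε h.δ_pos, min_le_right _ _,
      (ball_subset_ball (min_le_left _ _)).trans (hεs.trans ?_)⟩
    exact fun z hz => ⟨hz.1, fun hz' => hz.2 (subset_closure hz')⟩
  -- the letters of `ω` have ratios bounded below, since there are finitely many of them
  obtain ⟨θ, hθ, hθω⟩ : ∃ θ > 0, ∀ m, θ ≤ S.size [ω m] := by
    obtain ⟨e, -, he⟩ := exists_min_image (range ω) (fun e => S.size [e]) hω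
      ⟨ω 0, mem_range_self 0⟩
    exact ⟨_, S.size_pos _, fun m => he _ (mem_range_self m)⟩
  have hK := h.K_pos
  have hL := h.L_pos
  have hc := h.c_pos
  have hstep : ∀ m, θ / K * S.size (pre ω m) ≤ S.size (pre ω (m + 1)) := by
    intro m
    rw [div_mul_eq_mul_div, div_le_iff₀ hK, pre_succ]
    have := h.size_append (pre ω m) [ω m]
    have := mul_le_mul_of_nonneg_left (hθω m) (S.size_nonneg (pre ω m))
    linarith
  set c₀ := c * ρ * (θ / K / (L + 1)) with hc₀
  have hc₀pos : 0 < c₀ := by positivity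
  refine ⟨min c₀ (1 / 2), ⟨by positivity, (min_le_right _ _).trans_lt (by norm_num)⟩,
    L + 1, by positivity, fun r hr => (min_le_left _ _).trans ?_⟩
  obtain ⟨hr0, hr1⟩ := hr
  -- the first `m` at which `φ_{ω|m}(X)` fits in the ball of radius `r`
  have hex : ∃ m, (L + 1) * S.size (pre ω m) < r := by
    obtain ⟨m, hm⟩ := exists_pow_lt_of_lt_one (show 0 < r / (L + 1) by positivity) S.hs.2
    refine ⟨m, ?_⟩
    have := (S.size_le_pow (pre ω m)).trans_lt ((pre_length ω m).symm ▸ hm)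
    rwa [lt_div_iff₀' (by positivity)] at this
  classical
  obtain ⟨m, hm⟩ : ∃ m, Nat.find hex = m + 1 := by
    refine Nat.exists_eq_succ_of_ne_zero fun h0 => ?_
    have := Nat.find_spec hex
    rw [h0, show pre ω 0 = [] from rfl, size_nil] at this
    linarith
  have hm1 := Nat.find_spec hex
  have hm2 := Nat.find_min hex (m := m) (by omega)
  rw [hm] at hm1
  push Not at hm2
  have hlow : θ / K / (L + 1) * r ≤ S.size (pre ω (m + 1)) := by
    refine le_trans ?_ (hstep m)
    rw [div_mul_eq_mul_div, div_le_iff₀ (by positivity), mul_assoc, mul_comm (S.size _)]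
    exact mul_le_mul_of_nonneg_left hm2 (by positivity)
  refine le_por hr0 hc₀pos.le (y := S.compWord (pre ω (m + 1)) q) ?_
  refine (ball_subset_ball ?_).trans ((h.hole hπ hρ hρδ hq _).trans (sdiff_subset_sdiff_left ?_))
  · rw [hc₀, mul_assoc]
    exact mul_le_mul_of_nonneg_left hlow (by positivity)
  · rintro _ ⟨x, hx, rfl⟩
    obtain ⟨x', hx', hxω⟩ := hπ ω (m + 1)
    rw [← hxω]
    refine (h.upper _ x hx x' hx').trans_lt (lt_of_le_of_lt ?_ hm1)
    exact mul_le_mul_of_nonneg_right (by linarith) (S.size_nonneg _)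

end

/-! ### Selecting well separated words -/

section

/-- Packing: points at mutual distance at least `a * ρ` contain an `R * ρ`-separated subfamily
comprising a proportion of them which depends on `a` and `R` only. -/
lemma exists_separated_subset.{u} {V : Type*} [NormedAddCommGroup V] [NormedSpace ℝ V]
    [FiniteDimensional ℝ V] {a R : ℝ} (ha : 0 < a) (hR : 0 < R) :
    ∃ M : ℕ, ∀ (ι : Type u) (ρ : ℝ), 0 < ρ → ∀ (A : Finset ι) (f : ι → V),
      (∀ i ∈ A, ∀ j ∈ A, i ≠ j → a * ρ ≤ dist (f i) (f j)) →
      ∃ A' ⊆ A, A.card ≤ M * A'.card ∧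
        ∀ i ∈ A', ∀ j ∈ A', i ≠ j → R * ρ ≤ dist (f i) (f j) := by
  classical
  obtain ⟨t, -, ht, hcov⟩ :=
    (isCompact_closedBall (0 : V) R).finite_cover_balls (show 0 < a / 2 by positivity)
  refine ⟨ht.toFinset.card, fun ι ρ hρ A f hsep => ?_⟩
  -- a separated subset of maximal cardinality
  obtain ⟨Sep, hSep⟩ : ∃ P : Finset ι → Prop, ∀ B, P B ↔
      ∀ i ∈ B, ∀ j ∈ B, i ≠ j → R * ρ ≤ dist (f i) (f j) := ⟨_, fun _ => Iff.rfl⟩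
  obtain ⟨A', hA', hmax⟩ := Finset.exists_max_image
    (A.powerset.filter Sep)
    Finset.card ⟨∅, by simp [hSep]⟩
  rw [Finset.mem_filter, Finset.mem_powerset, hSep] at hA'
  refine ⟨A', hA'.1, ?_, hA'.2⟩
  have hnear : ∀ i ∈ A, ∃ j ∈ A', dist (f i) (f j) < R * ρ := by
    intro i hi
    by_contra! hfar
    have hiA' : i ∉ A' := fun h => by
      have := hfar i h
      rw [dist_self] at this
      exact absurd this (not_le.2 (by positivity))
    have h1 := hmax (insert i A') (by
      rw [Finset.mem_filter, Finset.mem_powerset, hSep]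
      refine ⟨Finset.insert_subset hi hA'.1, fun x hx y hy hxy => ?_⟩
      rcases Finset.mem_insert.1 hx with hxi | hxA <;>
        rcases Finset.mem_insert.1 hy with hyi | hyA
      · exact absurd (hxi.trans hyi.symm) hxy
      · exact hxi ▸ hfar y hyA
      · rw [dist_comm]; exact hyi ▸ hfar x hxA
      · exact hA'.2 x hxA y hyA hxy)
    rw [Finset.card_insert_of_notMem hiA'] at h1
    omega
  have hsub : A ⊆ A'.biUnion fun j => A.filter fun i => dist (f i) (f j) < R * ρ := by
    intro i hi
    obtain ⟨j, hj, hij⟩ := hnear i hi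
    exact Finset.mem_biUnion.2 ⟨j, hj, Finset.mem_filter.2 ⟨hi, hij⟩⟩
  refine (Finset.card_le_card hsub).trans ?_
  rw [mul_comm ht.toFinset.card]
  refine Finset.card_biUnion_le_card_mul _ _ _ fun j _ => ?_
  -- rescaled to unit size, distinct points near `f j` lie in distinct balls of the cover
  have hy : ∀ i ∈ A.filter fun i => dist (f i) (f j) < R * ρ,
      ∃ y ∈ t, ρ⁻¹ • (f i - f j) ∈ ball y (a / 2) := by
    intro i hi
    have hmem : ρ⁻¹ • (f i - f j) ∈ closedBall (0 : V) R := by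
      rw [mem_closedBall_zero_iff, norm_smul, norm_inv, Real.norm_of_nonneg hρ.le, ← dist_eq_norm,
        inv_mul_le_iff₀ hρ, mul_comm]
      exact (Finset.mem_filter.1 hi).2.le
    simpa using hcov hmem
  choose! y hyt hyb using hy
  refine Finset.card_le_card_of_injOn y (fun i hi => ht.mem_toFinset.2 (hyt i hi)) ?_
  intro i hi i' hi' hii'
  by_contra hne
  have h1 := hyb i hi
  have h2 := hyb i' hi'
  rw [← hii'] at h2
  have h3 := hsep i (Finset.mem_filter.1 hi).1 i' (Finset.mem_filter.1 hi').1 hne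
  have h4 := dist_triangle_right (ρ⁻¹ • (f i - f j)) (ρ⁻¹ • (f i' - f j)) (y i)
  rw [dist_smul₀, dist_sub_right, norm_inv, Real.norm_of_nonneg hρ.le, inv_mul_le_iff₀ hρ] at h4
  rw [mem_ball] at h1 h2
  nlinarith

variable {n : ℕ} {E : Type*} [Nontrivial (EuclideanSpace ℝ (Fin n))]
variable {S : CIFS n E} {K L c δ : ℝ}

/-- Among words of the same length and of comparable size `≈ 2⁻ᵏ`, a fixed proportion can be chosen
whose images of `X` are at mutual distance at least `2⁻ᵏ`. -/
lemma Controlled.exists_separated_words (h : S.Controlled K L c δ) :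
    ∃ M : ℕ, ∀ (N k : ℕ) (A : Finset (Fin N → E)),
      (∀ g ∈ A, (1 / 2 : ℝ) ^ (k + 1) < S.size (List.ofFn g) ∧
        S.size (List.ofFn g) ≤ (1 / 2) ^ k) →
      ∃ A' ⊆ A, A.card ≤ M * A'.card ∧ ∀ g ∈ A', ∀ g' ∈ A', g ≠ g' → ∀ x ∈ S.X, ∀ y ∈ S.X,
        (1 / 2 : ℝ) ^ k ≤ dist (S.compWord (List.ofFn g) x) (S.compWord (List.ofFn g') y) := by
  have hc := h.c_pos
  have hL := h.L_pos
  obtain ⟨r, hr, hrX⟩ := Metric.isOpen_iff.1 isOpen_interior _ S.base_mem_interior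
  have hr' : 0 < min δ r := lt_min h.δ_pos hr
  obtain ⟨M, hM⟩ := exists_separated_subset (V := EuclideanSpace ℝ (Fin n))
    (show 0 < c * min δ r / 2 by positivity) (show 0 < 2 * L + 1 by positivity)
  refine ⟨M, fun N k A hA => ?_⟩
  obtain ⟨A', hA'A, hcard, hsep⟩ := hM (Fin N → E) ((1 / 2) ^ k) (by positivity) A
    (fun g => S.compWord (List.ofFn g) S.base) (by
      intro g hg g' hg' hne
      by_contra! hlt
      have hball : S.compWord (List.ofFn g') S.base ∈
          ball (S.compWord (List.ofFn g) S.base) (c * min δ r * S.size (List.ofFn g)) := by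
        rw [mem_ball, dist_comm]
        refine hlt.trans_le ?_
        have h1 := (hA g hg).1.le
        rw [pow_succ] at h1
        have := mul_le_mul_of_nonneg_left h1 (show 0 ≤ c * min δ r by positivity)
        linarith
      obtain ⟨z, hz, hzg⟩ :=
        h.ball_subset_image _ _ S.base_mem_X _ hr' (min_le_left _ _) hball
      refine disjoint_left.1 (h.disjoint_interior (List.ofFn g') (List.ofFn g) (by simp)
        (fun h => hne (List.ofFn_injective h).symm))
        (mem_image_of_mem _ S.base_mem_interior) ?_
      exact ⟨z, hrX (ball_subset_ball (min_le_right _ _) hz), hzg⟩)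
  refine ⟨A', hA'A, hcard, fun g hg g' hg' hne x hx y hy => ?_⟩
  have h1 := hsep g hg g' hg' hne
  have h2 := dist_triangle4 (S.compWord (List.ofFn g) S.base) (S.compWord (List.ofFn g) x)
    (S.compWord (List.ofFn g') y) (S.compWord (List.ofFn g') S.base)
  have h3 := h.upper (List.ofFn g) _ S.base_mem_X x hx
  have h4 := h.upper (List.ofFn g') y hy _ S.base_mem_X
  have h5 := mul_le_mul_of_nonneg_left (hA g (hA'A hg)).2 hL.le
  have h6 := mul_le_mul_of_nonneg_left (hA g' (hA'A hg')).2 hL.le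
  linarith

end

/-! ### A lower bound for the dimension from separated words -/

section

variable {n : ℕ} {E : Type*}

/-- The infinite code obtained by concatenating the words `a (d 0), a (d 1), …` of length `N`. -/
def code {b N : ℕ} [NeZero N] (a : Fin b → Fin N → E) (d : ℕ → Fin b) (i : ℕ) : E :=
  a (d (i / N)) (Fin.ofNat N i)

lemma code_finite_range {b N : ℕ} [NeZero N] (a : Fin b → Fin N → E) (d : ℕ → Fin b) :
    (range (code a d)).Finite := by
  refine (finite_range fun p : Fin b × Fin N => a p.1 p.2).subset ?_
  rintro _ ⟨i, rfl⟩
  exact ⟨(_, _), rfl⟩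

lemma pre_code_succ {b N : ℕ} [NeZero N] (a : Fin b → Fin N → E) (d : ℕ → Fin b) (m : ℕ) :
    pre (code a d) ((m + 1) * N) = pre (code a d) (m * N) ++ List.ofFn (a (d m)) := by
  rw [add_mul, one_mul, pre_add]
  congr 1
  unfold pre code
  congr 1
  ext i
  have h1 : (m * N + i) / N = m := by
    rw [mul_comm, Nat.mul_add_div (NeZero.pos N), Nat.div_eq_of_lt i.2, add_zero]
  have h2 : Fin.ofNat N (m * N + i) = i := by
    ext
    simp [Nat.mod_eq_of_lt i.2]
  beta_reduce
  rw [h1, h2]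

lemma pre_code_congr {b N : ℕ} [NeZero N] (a : Fin b → Fin N → E) {d d' : ℕ → Fin b} {m : ℕ}
    (h : ∀ i < m, d i = d' i) : pre (code a d) (m * N) = pre (code a d') (m * N) :=
  pre_congr fun i hi => by
    unfold code
    rw [h _ (Nat.div_lt_of_lt_mul (by rwa [mul_comm] at hi))]

variable [Nontrivial (EuclideanSpace ℝ (Fin n))]
variable {S : CIFS n E} {K L c δ : ℝ}

lemma Controlled.pow_le_size_pre_code (h : S.Controlled K L c δ) {b N : ℕ} [NeZero N]
    (a : Fin b → Fin N → E) {σ : ℝ} (hσ0 : 0 < σ) (hσ : ∀ i, σ ≤ S.size (List.ofFn (a i)))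
    (d : ℕ → Fin b) (m : ℕ) : (σ / K) ^ m ≤ S.size (pre (code a d) (m * N)) := by
  have hK := h.K_pos
  induction m with
  | zero => simp [pre, size_nil]
  | succ m ih =>
    rw [pre_code_succ, pow_succ, mul_div_assoc', div_le_iff₀ hK, mul_comm _ K]
    exact (mul_le_mul ih (hσ _) hσ0.le (S.size_nonneg _)).trans (h.size_append _ _)

/-- If `b` words of common length have sizes at least `σ`, have well separated images of `X`, and
`b * (σ / K) ^ t ≥ 1`, then codes concatenated from them form a set of dimension at least `t`: the
map sending the point coded by `d` to the number in `[0, 1]` with base-`b` digits `d` is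
`t`-Hölder and onto. -/
lemma Controlled.le_dimH (h : S.Controlled K L c δ) {π : (ℕ → E) → EuclideanSpace ℝ (Fin n)}
    (hπ : ∀ ω m, π ω ∈ S.compWord (pre ω m) '' S.X) {b N : ℕ} (hb : 1 < b)
    (a : Fin b → Fin N → E) {σ η : ℝ} (hσ0 : 0 < σ) (hη : 0 < η)
    (hσ : ∀ i, σ ≤ S.size (List.ofFn (a i)))
    (hsep : ∀ i j, i ≠ j → ∀ x ∈ S.X, ∀ y ∈ S.X,
      η ≤ dist (S.compWord (List.ofFn (a i)) x) (S.compWord (List.ofFn (a j)) y))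
    {t : ℝ≥0} (ht : 0 < t) (hbt : 1 ≤ b * (σ / K) ^ (t : ℝ)) :
    (t : ℝ≥0∞) ≤ dimH (π '' {ω | (range ω).Finite}) := by
  have hK := h.K_pos
  have hN : NeZero N := by
    refine ⟨fun h0 => ?_⟩
    subst h0
    have h01 : (⟨0, by omega⟩ : Fin b) ≠ ⟨1, hb⟩ := by simp
    have := hsep _ _ h01 _ S.base_mem_X _ S.base_mem_X
    simp only [List.ofFn_zero, dist_self] at this
    exact absurd this (not_le.2 hη)
  set κ := c * min δ η with hκ
  have hκ0 : 0 < κ := mul_pos h.c_pos (lt_min h.δ_pos hη)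
  set f : (ℕ → Fin b) → EuclideanSpace ℝ (Fin n) := fun d => π (code a d) with hf
  have hdist : ∀ d d' m, (∀ i < m, d i = d' i) → d m ≠ d' m →
      κ * (σ / K) ^ m ≤ dist (f d) (f d') := by
    intro d d' m heq hne
    obtain ⟨z, hz, hzd⟩ := hπ (code a d) ((m + 1) * N)
    obtain ⟨z', hz', hzd'⟩ := hπ (code a d') ((m + 1) * N)
    rw [pre_code_succ, compWord_append] at hzd hzd'
    rw [← pre_code_congr a heq] at hzd'
    simp only [hf]
    rw [← hzd, ← hzd']
    refine le_trans ?_ (h.lower _ (S.compWord_mapsTo_X _ hz) (S.compWord_mapsTo_X _ hz'))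
    have h1 := hsep _ _ hne z hz z' hz'
    have h2 := h.pow_le_size_pre_code a hσ0 hσ d m
    have h3 := h.c_pos
    have h4 := h.δ_pos
    have h5 : 0 < min δ η := lt_min h4 hη
    rw [hκ]
    have h6 := min_le_min_left δ h1
    gcongr
  have hinj : Function.Injective f := by
    intro d d' hdd
    by_contra hne
    classical
    have hex : ∃ m, d m ≠ d' m := Function.ne_iff.1 hne
    have := hdist d d' (Nat.find hex) (fun i hi => not_not.1 (Nat.find_min hex hi))
      (Nat.find_spec hex)
    rw [hdd, dist_self] at this
    exact absurd this (not_le.2 (by positivity))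
  set g : EuclideanSpace ℝ (Fin n) → ℝ := fun x => by
    classical
    exact if hx : ∃ d, f d = x then Real.ofDigits hx.choose else 0 with hg
  have hgf : ∀ d, g (f d) = Real.ofDigits d := by
    intro d
    have hx : ∃ d', f d' = f d := ⟨d, rfl⟩
    simp only [hg]
    rw [dif_pos hx, hinj hx.choose_spec]
  have hhol : HolderOnWith (Real.toNNReal (κ⁻¹ ^ (t : ℝ))) t g (range f) := by
    rintro _ ⟨d, rfl⟩ _ ⟨d', rfl⟩
    rw [hgf, hgf]
    by_cases hdd : d = d'
    · simp [hdd]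
    classical
    have hex : ∃ m, d m ≠ d' m := Function.ne_iff.1 hdd
    set m := Nat.find hex
    have heq : ∀ i < m, d i = d' i := fun i hi => not_not.1 (Nat.find_min hex hi)
    have h1 := hdist d d' m heq (Nat.find_spec hex)
    have h2 := Real.abs_ofDigits_sub_ofDigits_le heq
    have h3 : ((b : ℝ) ^ m)⁻¹ ≤ ((σ / K) ^ m) ^ (t : ℝ) := by
      rw [← Real.rpow_natCast (σ / K), ← Real.rpow_mul (by positivity), mul_comm (m : ℝ),
        Real.rpow_mul (by positivity), Real.rpow_natCast, ← inv_pow]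
      gcongr
      rwa [inv_le_iff_one_le_mul₀' (by positivity)]
    have h4 : ((σ / K) ^ m) ^ (t : ℝ) ≤ (κ⁻¹ * dist (f d) (f d')) ^ (t : ℝ) := by
      gcongr
      rwa [le_inv_mul_iff₀ hκ0]
    rw [edist_dist, edist_dist, ENNReal.ofReal_rpow_of_nonneg dist_nonneg t.coe_nonneg,
      ← ENNReal.ofReal, ← ENNReal.ofReal_mul (by positivity), Real.dist_eq,
      ← Real.mul_rpow (by positivity) dist_nonneg]
    exact ENNReal.ofReal_le_ofReal (h2.trans (h3.trans h4))
  have h1 := hhol.dimH_image_le ht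
  have h2 : Icc (0 : ℝ) 1 ⊆ g '' range f := by
    intro y hy
    obtain ⟨d, -, rfl⟩ := Real.ofDigits_SurjOn hb hy
    exact ⟨f d, mem_range_self d, hgf d⟩
  have h3 : dimH (Icc (0 : ℝ) 1) = 1 := by
    rw [Real.dimH_of_nonempty_interior (by rw [interior_Icc]; exact nonempty_Ioo.2 one_pos)]
    simp
  have h4 : (1 : ℝ≥0∞) ≤ dimH (range f) / t := h3 ▸ (dimH_mono h2).trans h1
  rw [ENNReal.le_div_iff_mul_le (by simp [ht.ne']) (by simp), one_mul] at h4
  refine h4.trans (dimH_mono ?_)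
  rintro _ ⟨d, rfl⟩
  exact ⟨_, code_finite_range a d, rfl⟩

end

/-! ### Plenty of words of comparable size -/

section

variable {n : ℕ} {E : Type*} [Countable E] [Nontrivial (EuclideanSpace ℝ (Fin n))]
variable {S : CIFS n E} {K L c δ : ℝ}

/-- If `t' < t < dim J`, the number of words of some length `N` and of size `≈ 2⁻ᵏ` exceeds any
prescribed multiple of `2 ^ (k * t')` for suitable `N` and `k`. Otherwise the covers of `J` by
`φ_w(X)`, `|w| = N`, would have `t`-dimensional volumes at most a constant times
`∑ₖ 2 ^ (k * (t' - t))`. -/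
lemma Controlled.exists_many_words (h : S.Controlled K L c δ)
    {π : (ℕ → E) → EuclideanSpace ℝ (Fin n)}
    (hπ : ∀ ω m, π ω ∈ S.compWord (pre ω m) '' S.X) {t t' : ℝ≥0} (htt : t' < t)
    (ht : (t : ℝ≥0∞) < dimH (range π)) (C : ℝ) :
    ∃ (N k : ℕ) (A : Finset (Fin N → E)),
      (∀ g ∈ A, (1 / 2 : ℝ) ^ (k + 1) < S.size (List.ofFn g) ∧
        S.size (List.ofFn g) ≤ (1 / 2) ^ k) ∧
      C < A.card * ((1 / 2 : ℝ) ^ k) ^ (t' : ℝ) := by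
  by_contra! hno
  have hL := h.L_pos
  have ht0 : 0 < t := bot_le.trans_lt htt
  set q : ℝ := (1 / 2 : ℝ) ^ ((t : ℝ) - t') with hq
  have hq0 : 0 ≤ q := by positivity
  have hq1 : q < 1 := Real.rpow_lt_one (by norm_num) (by norm_num)
    (sub_pos.2 (NNReal.coe_lt_coe.2 htt))
  classical
  have hC0 : 0 ≤ C := by simpa using hno 0 0 ∅ (by simp)
  have hsum : ∀ N : ℕ, ∑' g : Fin N → E, ediam (S.compWord (List.ofFn g) '' S.X) ^ (t : ℝ)
      ≤ ENNReal.ofReal (∑' k : ℕ, C * L ^ (t : ℝ) * q ^ k) := by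
    intro N
    let P : ℕ → (Fin N → E) → Prop := fun k g =>
      (1 / 2 : ℝ) ^ (k + 1) < S.size (List.ofFn g) ∧ S.size (List.ofFn g) ≤ (1 / 2) ^ k
    calc ∑' g : Fin N → E, ediam (S.compWord (List.ofFn g) '' S.X) ^ (t : ℝ)
        ≤ ∑' g : Fin N → E, ∑' k : ℕ,
            if P k g then ENNReal.ofReal ((L * (1 / 2) ^ k) ^ (t : ℝ)) else 0 := by
          refine ENNReal.tsum_le_tsum fun g => ?_
          obtain ⟨k, hk⟩ := exists_nat_pow_near_of_lt_one (S.size_pos (List.ofFn g))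
            (S.size_le_one _) (show (0 : ℝ) < 1 / 2 by norm_num) (by norm_num)
          refine le_trans ?_ (ENNReal.le_tsum k)
          rw [if_pos hk, ← ENNReal.ofReal_rpow_of_nonneg (by positivity) t.coe_nonneg]
          refine ENNReal.rpow_le_rpow ?_ t.coe_nonneg
          refine ediam_le ?_
          rintro _ ⟨x, hx, rfl⟩ _ ⟨y, hy, rfl⟩
          rw [edist_dist]
          exact ENNReal.ofReal_le_ofReal
            ((h.upper _ x hx y hy).trans (mul_le_mul_of_nonneg_left hk.2 hL.le))
      _ = ∑' k : ℕ, ∑' g : Fin N → E,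
            if P k g then ENNReal.ofReal ((L * (1 / 2) ^ k) ^ (t : ℝ)) else 0 := ENNReal.tsum_comm
      _ ≤ ∑' k : ℕ, ENNReal.ofReal (C * L ^ (t : ℝ) * q ^ k) := by
          refine ENNReal.tsum_le_tsum fun k => ?_
          rw [ENNReal.tsum_eq_iSup_sum]
          refine iSup_le fun F => ?_
          rw [← Finset.sum_filter, Finset.sum_const, nsmul_eq_mul, ← ENNReal.ofReal_natCast,
            ← ENNReal.ofReal_mul (by positivity)]
          refine ENNReal.ofReal_le_ofReal ?_
          have h1 := hno N k (F.filter (P k)) fun g hg => (Finset.mem_filter.1 hg).2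
          have h2 : ((1 / 2 : ℝ) ^ k) ^ (t : ℝ) = ((1 / 2 : ℝ) ^ k) ^ (t' : ℝ) * q ^ k := by
            rw [hq, ← Real.rpow_natCast ((1 / 2 : ℝ) ^ ((t : ℝ) - t')),
              ← Real.rpow_mul (by norm_num), mul_comm ((t : ℝ) - t'),
              Real.rpow_mul (by norm_num), Real.rpow_natCast, ← Real.rpow_add (by positivity)]
            congr 1
            ring
          rw [Real.mul_rpow hL.le (by positivity), h2]
          calc _ = ((F.filter (P k)).card * ((1 / 2 : ℝ) ^ k) ^ (t' : ℝ))
                * (L ^ (t : ℝ) * q ^ k) := by ring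
            _ ≤ C * (L ^ (t : ℝ) * q ^ k) := by gcongr
            _ = _ := by ring
      _ = _ := (ENNReal.ofReal_tsum_of_nonneg (fun k => by positivity)
          ((summable_geometric_of_lt_one hq0 hq1).mul_left _)).symm
  have hmeas : MeasureTheory.Measure.hausdorffMeasure (t : ℝ) (range π)
      ≤ ENNReal.ofReal (∑' k : ℕ, C * L ^ (t : ℝ) * q ^ k) := by
    refine (MeasureTheory.Measure.hausdorffMeasure_le_liminf_tsum (t : ℝ) (range π) (l := atTop)
      (fun N : ℕ => ENNReal.ofReal (L * S.s ^ N)) ?_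
      (fun N (g : Fin N → E) => S.compWord (List.ofFn g) '' S.X) ?_ ?_).trans ?_
    · rw [← ENNReal.ofReal_zero]
      refine ENNReal.tendsto_ofReal ?_
      simpa using (tendsto_pow_atTop_nhds_zero_of_lt_one S.hs.1.le S.hs.2).const_mul L
    · refine Eventually.of_forall fun N g => ediam_le ?_
      rintro _ ⟨x, hx, rfl⟩ _ ⟨y, hy, rfl⟩
      rw [edist_dist]
      refine ENNReal.ofReal_le_ofReal ((h.upper _ x hx y hy).trans ?_)
      have := S.size_le_pow (List.ofFn g)
      rw [List.length_ofFn] at this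
      exact mul_le_mul_of_nonneg_left this hL.le
    · refine Eventually.of_forall fun N => ?_
      rintro _ ⟨ω, rfl⟩
      exact mem_iUnion.2 ⟨fun i => ω i, hπ ω N⟩
    · exact (liminf_le_liminf (Eventually.of_forall hsum)).trans_eq (liminf_const _)
  refine absurd ht (not_lt.2 (dimH_le_of_hausdorffMeasure_ne_top ?_))
  exact (hmeas.trans_lt ENNReal.ofReal_lt_top).ne

/-- Codes using finitely many letters already realise the dimension of the limit set. -/
lemma Controlled.dimH_finite_range (h : S.Controlled K L c δ)
    {π : (ℕ → E) → EuclideanSpace ℝ (Fin n)}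
    (hπ : ∀ ω m, π ω ∈ S.compWord (pre ω m) '' S.X) :
    dimH (π '' {ω | (range ω).Finite}) = dimH (range π) := by
  refine le_antisymm (dimH_mono (image_subset_range _ _)) ?_
  by_contra! hlt
  obtain ⟨t', ht'1, ht'2⟩ := ENNReal.lt_iff_exists_nnreal_btwn.1 hlt
  obtain ⟨t, ht1, ht2⟩ := ENNReal.lt_iff_exists_nnreal_btwn.1 ht'2
  have ht'0 : 0 < t' := ENNReal.coe_pos.1 (bot_le.trans_lt ht'1)
  have hK := h.K_pos
  obtain ⟨M, hM⟩ := h.exists_separated_words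
  -- the first term of the maximum makes the chosen words at least two, the second one makes
  -- their number compensate the distortion
  obtain ⟨N, k, A, hA, hcard⟩ := h.exists_many_words hπ (ENNReal.coe_lt_coe.1 ht1) ht2
    (M * max 1 ((2 * K) ^ (t' : ℝ)))
  obtain ⟨A', hA'A, hcard', hsep⟩ := hM N k A hA
  set y : ℝ := (1 / 2 : ℝ) ^ k with hy
  have hy0 : 0 < y := by positivity
  have hyt0 : 0 < y ^ (t' : ℝ) := by positivity
  have hyt1 : y ^ (t' : ℝ) ≤ 1 :=
    Real.rpow_le_one hy0.le (pow_le_one₀ (by norm_num) (by norm_num)) t'.coe_nonneg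
  have hb : max 1 ((2 * K) ^ (t' : ℝ)) < A'.card * y ^ (t' : ℝ) := by
    have h1 : (A.card : ℝ) ≤ M * A'.card := by exact_mod_cast hcard'
    have h2 := hcard.trans_le (mul_le_mul_of_nonneg_right h1 hyt0.le)
    rw [mul_assoc] at h2
    exact lt_of_mul_lt_mul_left h2 (Nat.cast_nonneg M)
  have hb1 : 1 < A'.card := by
    have h1 := (le_max_left _ _).trans_lt hb
    have h2 := mul_le_mul_of_nonneg_left hyt1 (Nat.cast_nonneg (α := ℝ) A'.card)
    rw [mul_one] at h2
    exact_mod_cast h1.trans_le h2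
  have hfin := h.le_dimH hπ hb1 (fun i => (A'.equivFin.symm i : Fin N → E))
    (σ := y / 2) (η := y) (by positivity) hy0
    (fun i => by
      have := (hA _ (hA'A (A'.equivFin.symm i).2)).1.le
      rwa [pow_succ, mul_one_div] at this)
    (fun i j hij => hsep _ (A'.equivFin.symm i).2 _ (A'.equivFin.symm j).2
      fun heq => hij (A'.equivFin.symm.injective (Subtype.ext heq))) ht'0
    (by
      rw [div_div, Real.div_rpow hy0.le (by positivity), mul_div_assoc',
        le_div_iff₀ (by positivity), one_mul]
      exact ((le_max_right _ _).trans_lt hb).le)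
  exact absurd ht'1 (not_lt.2 hfin)

end

end CIFS

/-- If a CIFS satisfies `X ∖ closure(⋃ₑ φₑ(X)) ≠ ∅`, then there is a
subset `J̃` of the limit set `J = range π` of full Hausdorff dimension such that `J` is
porous at every point of `J̃`. -/
theorem stmt1 {n : ℕ} {E : Type*} [Countable E] [Nontrivial E]
    (S : CIFS n E) (hBDP : S.BDP)
    (π : (ℕ → E) → EuclideanSpace ℝ (Fin n))
    (hπ : ∀ ω : ℕ → E, ∀ m : ℕ,
      π ω ∈ S.compWord (List.ofFn fun i : Fin m => ω i) '' S.X)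
    (hxx1 : (S.X \ closure (⋃ e : E, S.φ e '' S.X)).Nonempty) :
    ∃ Jt : Set (EuclideanSpace ℝ (Fin n)), Jt ⊆ Set.range π ∧
      dimH Jt = dimH (Set.range π) ∧
      ∀ x ∈ Jt, PorousAt (Set.range π) x := by
  have hnt : Nontrivial (EuclideanSpace ℝ (Fin n)) := by
    rw [← not_subsingleton_iff_nontrivial]
    -- in a one-point space the images `φ_e(X)` would cover `X`
    intro hsub
    obtain ⟨x, hx, hx'⟩ := hxx1
    obtain ⟨e⟩ : Nonempty E := inferInstance
    exact hx' (subset_closure (mem_iUnion.2 ⟨e, x, hx, Subsingleton.elim _ _⟩))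
  obtain ⟨K, L, c, δ, h⟩ := S.exists_controlled hBDP
  refine ⟨π '' {ω | (range ω).Finite}, image_subset_range _ _, h.dimH_finite_range hπ, ?_⟩
  rintro _ ⟨ω, hω, rfl⟩
  exact h.porousAt hπ hxx1 hω
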